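/- Let F be a finite field of odd cardinality q, and let sl₂(F) be the 3-dimensional F-vector space of trace-zero 2×2 matrices over F, with the nondegenerate quadratic form A ↦ det A. Then the group of all F-linear automorphisms of sl₂(F) preserving this quadratic form is isomorphic to (ℤ/2ℤ) × PGL(2,F), where PGL(2,F) is the quotient of GL(2,F) by its subgroup of scalar matrices; the PGL(2,F)-factor acts by conjugation A ↦ g A g⁻¹ and the ℤ/2ℤ-factor is generated by A ↦ −A. -/

import Mathlib

noncomputable section

open Matrix

variable (F : Type) [Field F]

/-- The space `sl₂(F)` of trace-zero `2 × 2` matrices. -/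
def sl2 : Submodule F (Matrix (Fin 2) (Fin 2) F) :=
  LinearMap.ker (Matrix.traceLinearMap (Fin 2) F F)

/-- The isometry group of the quadratic space `(sl₂(F), det)`, i.e. `O(3, q)`. -/
def O3 : Subgroup ((sl2 F) ≃ₗ[F] (sl2 F)) where
  carrier := {T | ∀ A : sl2 F,
    ((T A : Matrix (Fin 2) (Fin 2) F)).det = ((A : Matrix (Fin 2) (Fin 2) F)).det}
  one_mem' := fun A => rfl
  mul_mem' := by
    intro f g hf hg A
    have h1 : (f * g) A = f (g A) := rfl
    rw [h1, hf, hg]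
  inv_mem' := by
    intro f hf A
    have h1 : f (f⁻¹ A) = A := f.apply_symm_apply A
    have := hf (f⁻¹ A)
    rw [h1] at this
    exact this.symm

/-- The subgroup of scalar matrices in `GL(2, F)`. -/
def scalarSubgroup : Subgroup (GL (Fin 2) F) where
  carrier := {g | ∃ c : Fˣ, (g : Matrix (Fin 2) (Fin 2) F) = (c : F) • 1}
  one_mem' := ⟨1, by simp⟩
  mul_mem' := by
    rintro a b ⟨c, hc⟩ ⟨d, hd⟩
    refine ⟨c * d, ?_⟩
    have : ((a * b : GL (Fin 2) F) : Matrix (Fin 2) (Fin 2) F)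
        = (a : Matrix (Fin 2) (Fin 2) F) * (b : Matrix (Fin 2) (Fin 2) F) := rfl
    rw [this, hc, hd, smul_mul_smul_comm, one_mul]
    push_cast
    rfl
  inv_mem' := by
    rintro a ⟨c, hc⟩
    refine ⟨c⁻¹, ?_⟩
    have h2 : (a : Matrix (Fin 2) (Fin 2) F) * (((c⁻¹ : Fˣ) : F) • 1) = 1 := by
      rw [hc, smul_mul_smul_comm, one_mul]
      have : (c : F) * ((c⁻¹ : Fˣ) : F) = 1 := by
        rw [← Units.val_mul, mul_inv_cancel, Units.val_one]
      rw [this, one_smul]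
    calc ((a⁻¹ : GL (Fin 2) F) : Matrix (Fin 2) (Fin 2) F)
        = (a⁻¹ : GL (Fin 2) F) * ((a : Matrix (Fin 2) (Fin 2) F) * (((c⁻¹ : Fˣ) : F) • 1)) := by
          rw [h2, mul_one]
      _ = (((a⁻¹ : GL (Fin 2) F) : Matrix (Fin 2) (Fin 2) F) * (a : Matrix (Fin 2) (Fin 2) F))
            * (((c⁻¹ : Fˣ) : F) • 1) := by rw [mul_assoc]
      _ = (((c⁻¹ : Fˣ) : F) • 1) := by rw [Units.inv_mul, one_mul]

instance scalarSubgroup_normal : (scalarSubgroup F).Normal := by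
  constructor
  rintro x ⟨c, hc⟩ g
  refine ⟨c, ?_⟩
  have h1 : ((g * x * g⁻¹ : GL (Fin 2) F) : Matrix (Fin 2) (Fin 2) F)
      = (g : Matrix (Fin 2) (Fin 2) F) * (x : Matrix (Fin 2) (Fin 2) F)
        * ((g⁻¹ : GL (Fin 2) F) : Matrix (Fin 2) (Fin 2) F) := rfl
  rw [h1, hc, mul_smul_comm, mul_one, smul_mul_assoc, Units.mul_inv]

/-- `PGL(2, F)`: the quotient of `GL(2, F)` by its subgroup of scalar matrices. -/
abbrev PGL2 := GL (Fin 2) F ⧸ scalarSubgroup F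

theorem mem_sl2' (A : Matrix (Fin 2) (Fin 2) F) : A ∈ sl2 F ↔ A.trace = 0 := by
  simp [sl2, LinearMap.mem_ker]

/-- conjugation on trace-zero matrices -/
def conjLin (g : GL (Fin 2) F) : sl2 F →ₗ[F] sl2 F where
  toFun A := ⟨(g : Matrix (Fin 2) (Fin 2) F) * A.1 * ((g⁻¹ : GL (Fin 2) F) : Matrix (Fin 2) (Fin 2) F), by
    have h := (mem_sl2' F _).1 A.2
    rw [mem_sl2', Matrix.trace_mul_cycle, Units.inv_mul, one_mul, h]⟩
  map_add' A B := by
    apply Subtype.ext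
    simp only [Submodule.coe_add, mul_add, add_mul]
  map_smul' c A := by
    apply Subtype.ext
    simp only [Submodule.coe_smul, mul_smul_comm, smul_mul_assoc, RingHom.id_apply]

theorem conjLin_mul (g h : GL (Fin 2) F) : conjLin F (g * h) = conjLin F g ∘ₗ conjLin F h := by
  ext1 A
  apply Subtype.ext
  simp only [conjLin, LinearMap.coe_mk, AddHom.coe_mk, LinearMap.comp_apply, _root_.mul_inv_rev,
    Units.val_mul, mul_assoc]

theorem conjLin_one : conjLin F 1 = LinearMap.id := by
  ext1 A
  apply Subtype.ext
  simp [conjLin]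

/-- conjugation as an isometry -/
def conjHom : GL (Fin 2) F →* O3 F where
  toFun g := ⟨LinearEquiv.ofLinearMap (conjLin F g) (conjLin F g⁻¹)
      (by rw [← conjLin_mul, mul_inv_cancel, conjLin_one])
      (by rw [← conjLin_mul, inv_mul_cancel, conjLin_one]), by
    intro A
    change ((g : Matrix (Fin 2) (Fin 2) F) * A.1 *
      ((g⁻¹ : GL (Fin 2) F) : Matrix (Fin 2) (Fin 2) F)).det = A.1.det
    rw [Matrix.det_mul_right_comm, Units.mul_inv, one_mul]⟩
  map_one' := by
    apply Subtype.ext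
    ext1 A
    exact congrArg (fun f => f A) (conjLin_one F)
  map_mul' g h := by
    apply Subtype.ext
    ext1 A
    exact congrArg (fun f => f A) (conjLin_mul F g h)

theorem conjHom_apply (g : GL (Fin 2) F) (A : sl2 F) :
    (((conjHom F g : O3 F) : (sl2 F) ≃ₗ[F] (sl2 F)) A : Matrix (Fin 2) (Fin 2) F)
      = (g : Matrix (Fin 2) (Fin 2) F) * (A : Matrix (Fin 2) (Fin 2) F)
            * ((g⁻¹ : GL (Fin 2) F) : Matrix (Fin 2) (Fin 2) F) := rfl

/-- minus identity -/
def negO3 : O3 F := ⟨LinearEquiv.neg F, by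
  intro A
  change (-A.1).det = A.1.det
  simp [Matrix.det_fin_two]⟩

theorem negO3_apply (A : sl2 F) :
    (((negO3 F : O3 F) : (sl2 F) ≃ₗ[F] (sl2 F)) A : Matrix (Fin 2) (Fin 2) F) = -A.1 := rfl

theorem negO3_mul : negO3 F * negO3 F = 1 := by
  apply Subtype.ext
  ext1 A
  exact neg_neg A

theorem negO3_comm (T : O3 F) : Commute (negO3 F) T := by
  apply Subtype.ext
  ext1 A
  exact (map_neg T.1 A).symm

/-- the sign hom -/
def sgnO3Hom : Multiplicative (ZMod 2) →* O3 F where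
  toFun z := if z = 1 then 1 else negO3 F
  map_one' := by simp
  map_mul' := by
    have h : ∀ z : Multiplicative (ZMod 2), z = 1 ∨ z = Multiplicative.ofAdd 1 := by decide
    have h1 : (Multiplicative.ofAdd 1 : Multiplicative (ZMod 2)) ≠ 1 := by decide
    have h2 : (Multiplicative.ofAdd 1 * Multiplicative.ofAdd 1 : Multiplicative (ZMod 2)) = 1 := by
      decide
    intro x y
    rcases h x with rfl | rfl <;> rcases h y with rfl | rfl <;> simp [h1, h2, negO3_mul]

theorem sgnO3Hom_gen : sgnO3Hom F (Multiplicative.ofAdd 1) = negO3 F := by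
  have h1 : (Multiplicative.ofAdd 1 : Multiplicative (ZMod 2)) ≠ 1 := by decide
  simp [sgnO3Hom, h1]

/-- conjugation on PGL -/
def pglHom : PGL2 F →* O3 F := QuotientGroup.lift (scalarSubgroup F) (conjHom F) (by
  rintro g ⟨c, hc⟩
  apply Subtype.ext
  ext1 A
  apply Subtype.ext
  have : (c : F) • ((g⁻¹ : GL (Fin 2) F) : Matrix (Fin 2) (Fin 2) F) = 1 := by
    rw [← Units.mul_inv g, hc, smul_mul_assoc, one_mul]
  rw [conjHom_apply, hc, smul_mul_assoc, one_mul, smul_mul_assoc, ← mul_smul_comm, this, mul_one]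
  rfl)

/-- the combined hom -/
def bigHom : Multiplicative (ZMod 2) × PGL2 F →* O3 F :=
  MonoidHom.noncommCoprod (sgnO3Hom F) (pglHom F) (by
    have h : ∀ z : Multiplicative (ZMod 2), z = 1 ∨ z = Multiplicative.ofAdd 1 := by decide
    intro x y
    rcases h x with rfl | rfl
    · simp
    · rw [sgnO3Hom_gen]; exact negO3_comm F _)

/-- matrix in sl2 -/
def mk3 (a b c : F) : sl2 F := ⟨!![a, b; c, -a], by simp [mem_sl2', Matrix.trace_fin_two]⟩

theorem eq_mk3 (A : sl2 F) : ∃ a b c, A = mk3 F a b c := by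
  refine ⟨A.1 0 0, A.1 0 1, A.1 1 0, Subtype.ext ?_⟩
  have h := (mem_sl2' F _).1 A.2
  rw [Matrix.trace_fin_two] at h
  ext i j
  fin_cases i <;> fin_cases j <;> simp [mk3]
  linear_combination h

theorem det_mk3 (a b c : F) : (mk3 F a b c).1.det = -a * a - b * c := by
  simp [mk3, Matrix.det_fin_two]

theorem mk3_lin (a b c : F) : mk3 F a b c = a • mk3 F 1 0 0 + b • mk3 F 0 1 0 + c • mk3 F 0 0 1 := by
  apply Subtype.ext
  ext i j
  fin_cases i <;> fin_cases j <;> simp [mk3]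

theorem mk3_ext (T U : O3 F) (h1 : T.1 (mk3 F 1 0 0) = U.1 (mk3 F 1 0 0))
   (h2 : T.1 (mk3 F 0 1 0) = U.1 (mk3 F 0 1 0))
   (h3 : T.1 (mk3 F 0 0 1) = U.1 (mk3 F 0 0 1)) : T = U := by
  apply Subtype.ext
  ext1 A
  obtain ⟨a, b, c, rfl⟩ := eq_mk3 F A
  rw [mk3_lin]
  simp only [map_add, map_smul, h1, h2, h3]

theorem inj_aux (h2 : (2 : F) ≠ 0) (x : Multiplicative (ZMod 2) × PGL2 F) (hx : bigHom F x = 1) :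
    x = 1 := by
  have h : ∀ z : Multiplicative (ZMod 2), z = 1 ∨ z = Multiplicative.ofAdd 1 := by decide
  obtain ⟨z, y⟩ := x
  obtain ⟨g, rfl⟩ := QuotientGroup.mk_surjective y
  have key : ∃ e : F, (z = 1 ∧ e = 1 ∨ e = -1) ∧ ∀ A : sl2 F, g.1 * A.1 = e • (A.1 * g.1) := by
    have hx' : sgnO3Hom F z * conjHom F g = 1 := hx
    rcases h z with rfl | rfl
    · refine ⟨1, by simp, fun A => ?_⟩
      rw [map_one, one_mul] at hx'
      have h3 := conjHom_apply F g A
      rw [hx'] at h3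
      have h4 : A.1 = g.1 * A.1 * (g⁻¹).1 := h3
      rw [one_smul]
      conv_rhs => rw [h4]
      rw [mul_assoc, Units.inv_mul, mul_one]
    · refine ⟨-1, by simp, fun A => ?_⟩
      rw [sgnO3Hom_gen] at hx'
      have hx2 : conjHom F g = negO3 F := by
        rw [← mul_one (negO3 F), ← hx', ← mul_assoc, negO3_mul, one_mul]
      have h3 := conjHom_apply F g A
      rw [hx2] at h3
      have h4 : - A.1 = g.1 * A.1 * (g⁻¹).1 := h3
      rw [neg_smul, one_smul, ← neg_mul, h4, mul_assoc, Units.inv_mul, mul_one]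
  obtain ⟨e, he, hk⟩ := key
  have hdet : g.1.det ≠ 0 := ((Matrix.isUnit_iff_isUnit_det _).1 g.isUnit).ne_zero
  rw [Matrix.det_fin_two] at hdet
  have k1 := hk (mk3 F 1 0 0)
  have k2 := hk (mk3 F 0 1 0)
  have k3 := hk (mk3 F 0 0 1)
  rw [← Matrix.ext_iff] at k1 k2 k3
  clear hk hx
  simp [mk3, Matrix.mul_apply, Fin.forall_fin_two, Matrix.vecMul, dotProduct, Fin.sum_univ_two] at k1 k2 k3
  rcases he with ⟨rfl, rfl⟩ | rfl
  · refine Prod.ext rfl ((QuotientGroup.eq_one_iff g).2 ?_)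
    have h00 : g.1 0 0 ≠ 0 := by grind
    refine ⟨Units.mk0 (g.1 0 0) h00, ?_⟩
    ext i j
    fin_cases i <;> fin_cases j <;> simp <;> grind
  · exfalso
    grind

theorem surj_aux (h2 : (2 : F) ≠ 0) (T : O3 F) : ∃ x, bigHom F x = T := by
  have h : ∀ z : Multiplicative (ZMod 2), z = 1 ∨ z = Multiplicative.ofAdd 1 := by decide
  suffices hs : ∃ (g : GL (Fin 2) F) (c : F), (c = 1 ∨ c = -1) ∧ ∀ A : sl2 F, A = mk3 F 1 0 0 ∨ A = mk3 F 0 1 0 ∨ A = mk3 F 0 0 1 →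
      (T.1 A).1 * g.1 = c • (g.1 * A.1) by
    obtain ⟨g, c, hc, hk⟩ := hs
    have hk' : ∀ A : sl2 F, A = mk3 F 1 0 0 ∨ A = mk3 F 0 1 0 ∨ A = mk3 F 0 0 1 →
      (T.1 A).1 = c • (g.1 * A.1 * (g⁻¹).1) := by
      intro A hA
      rw [← smul_mul_assoc, ← hk A hA, mul_assoc, Units.mul_inv, mul_one]
    rcases hc with rfl | rfl
    · refine ⟨(1, QuotientGroup.mk g), ?_⟩
      have e1 : bigHom F (1, QuotientGroup.mk g) = conjHom F g := by
        change sgnO3Hom F 1 * conjHom F g = _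
        simp
      rw [e1]
      apply mk3_ext <;> apply Subtype.ext <;> rw [conjHom_apply, hk' _ (by simp), one_smul]
    · refine ⟨(Multiplicative.ofAdd 1, QuotientGroup.mk g), ?_⟩
      have e1 : bigHom F (Multiplicative.ofAdd 1, QuotientGroup.mk g) = negO3 F * conjHom F g := by
        change sgnO3Hom F _ * conjHom F g = _
        rw [sgnO3Hom_gen]
      rw [e1]
      have e2 : ∀ A, ((negO3 F * conjHom F g).1 A).1 = - (g.1 * A.1 * (g⁻¹).1) := fun A => rfl
      apply mk3_ext <;> apply Subtype.ext <;> rw [e2, hk' _ (by simp), neg_smul, one_smul]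
  obtain ⟨p, q, r, hH⟩ := eq_mk3 F (T.1 (mk3 F 1 0 0))
  obtain ⟨n1, n2, n3, hN⟩ := eq_mk3 F (T.1 (mk3 F 0 1 0))
  obtain ⟨m1, m2, m3, hM⟩ := eq_mk3 F (T.1 (mk3 F 0 0 1))
  have hT : ∀ a b c : F, (a * p + b * n1 + c * m1) * (a * p + b * n1 + c * m1) +
      (a * q + b * n2 + c * m2) * (a * r + b * n3 + c * m3) = a * a + b * c := by
    intro a b c
    have h3 := T.2 (mk3 F a b c)
    rw [mk3_lin F a b c] at h3
    rw [map_add, map_add, map_smul, map_smul, map_smul, hH, hN, hM, ← mk3_lin F a b c,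
      det_mk3, Matrix.det_fin_two] at h3
    simp [mk3] at h3
    linear_combination -h3
  have t1 := hT 1 0 0
  have t2 := hT 0 1 0
  have t3 := hT 0 0 1
  have t12 := hT 1 1 0
  have t13 := hT 1 0 1
  have t23 := hT 0 1 1
  simp only [one_mul, zero_mul, add_zero, zero_add, mul_one, mul_zero] at t1 t2 t3 t12 t13 t23
  have u12 : 2 * p * n1 + q * n3 + r * n2 = 0 := by linear_combination t12 - t1 - t2
  have u13 : 2 * p * m1 + q * m3 + r * m2 = 0 := by linear_combination t13 - t1 - t3
  have u23 : 2 * n1 * m1 + n2 * m3 + n3 * m2 = 1 := by linear_combination t23 - t2 - t3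
  clear t12 t13 t23 hT
  -- a kernel vector of N
  obtain ⟨v1, v2, hv, hv1, hv2⟩ : ∃ v1 v2 : F, (v1 ≠ 0 ∨ v2 ≠ 0) ∧ n1 * v1 + n2 * v2 = 0 ∧
      n3 * v1 - n1 * v2 = 0 := by
    by_cases hn : n1 = 0 ∧ n3 = 0
    · exact ⟨1, 0, by simp, by simp [hn.1], by simp [hn.2]⟩
    · refine ⟨n1, n3, by tauto, by linear_combination t2, by ring⟩
  obtain ⟨w1, hw1⟩ : ∃ w, w = m1 * v1 + m2 * v2 := ⟨_, rfl⟩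
  obtain ⟨w2, hw2⟩ : ∃ w, w = m3 * v1 - m1 * v2 := ⟨_, rfl⟩
  obtain ⟨y1, hy1⟩ : ∃ w, w = p * v1 + q * v2 := ⟨_, rfl⟩
  obtain ⟨y2, hy2⟩ : ∃ w, w = r * v1 - p * v2 := ⟨_, rfl⟩
  -- N w = v
  have nw1 : n1 * w1 + n2 * w2 = v1 := by
    subst hw1 hw2
    linear_combination v1 * u23 - m1 * hv1 - m2 * hv2
  have nw2 : n3 * w1 - n1 * w2 = v2 := by
    subst hw1 hw2
    linear_combination v2 * u23 - m3 * hv1 + m1 * hv2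
  -- M w = 0
  have mw1 : m1 * w1 + m2 * w2 = 0 := by
    subst hw1 hw2
    linear_combination v1 * t3
  have mw2 : m3 * w1 - m1 * w2 = 0 := by
    subst hw1 hw2
    linear_combination v2 * t3
  -- N y = 0
  have ny1 : n1 * y1 + n2 * y2 = 0 := by
    subst hy1 hy2
    linear_combination v1 * u12 - p * hv1 - q * hv2
  have ny2 : n3 * y1 - n1 * y2 = 0 := by
    subst hy1 hy2
    linear_combination v2 * u12 - r * hv1 + p * hv2
  have x1 : n1 * (v1 * y2 - v2 * y1) = 0 := by
    linear_combination y2 * hv1 - v2 * ny1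
  have x2 : n2 * (v1 * y2 - v2 * y1) = 0 := by
    linear_combination v1 * ny1 - y1 * hv1
  have x3 : n3 * (v1 * y2 - v2 * y1) = 0 := by
    linear_combination y2 * hv2 - v2 * ny2
  have hX : v1 * y2 - v2 * y1 = 0 := by
    linear_combination (-(v1 * y2 - v2 * y1)) * u23 + 2 * m1 * x1 + m3 * x2 + m2 * x3
  obtain ⟨c, hc1, hc2⟩ : ∃ c, y1 = c * v1 ∧ y2 = c * v2 := by
    by_cases h0 : v1 = 0
    · have h0' : v2 ≠ 0 := by tauto
      refine ⟨y2 / v2, ?_, by field_simp⟩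
      field_simp
      linear_combination -hX
    · refine ⟨y1 / v1, by field_simp, ?_⟩
      field_simp
      linear_combination hX
  -- H y = v
  have cc1 : c * c * v1 = v1 := by
    have : p * y1 + q * y2 = v1 := by
      rw [hy1, hy2]; linear_combination v1 * t1
    rw [hc1, hc2] at this
    linear_combination this - c * hc1 + c * hy1
  have cc2 : c * c * v2 = v2 := by
    have : r * y1 - p * y2 = v2 := by
      rw [hy1, hy2]; linear_combination v2 * t1
    rw [hc1, hc2] at this
    linear_combination this - c * hc2 + c * hy2
  have hcc : c * c = 1 := by
    rcases hv with h0 | h0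
    · exact mul_right_cancel₀ h0 (by rw [cc1, one_mul])
    · exact mul_right_cancel₀ h0 (by rw [cc2, one_mul])
  have hcne : c ≠ 0 := by rintro rfl; simp at hcc
  -- H w = - c w
  have hw1' : p * w1 + q * w2 = -(c * w1) := by
    have e1 : p * w1 + q * w2 = -(m1 * y1 + m2 * y2) := by
      rw [hw1, hw2, hy1, hy2]; linear_combination v1 * u13
    rw [e1, hc1, hc2, hw1]; ring
  have hw2' : r * w1 - p * w2 = -(c * w2) := by
    have e1 : r * w1 - p * w2 = -(m3 * y1 - m1 * y2) := by
      rw [hw1, hw2, hy1, hy2]; linear_combination v2 * u13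
    rw [e1, hc1, hc2, hw2]; ring
  have hD : v1 * w2 - v2 * w1 ≠ 0 := by
    intro h0
    have a1 : v1 * v1 = 0 := by linear_combination w1 * hv1 + n2 * h0 - v1 * nw1
    have a2 : v2 * v2 = 0 := by linear_combination w2 * hv2 - n3 * h0 - v2 * nw2
    simp at a1 a2
    tauto
  have hdet : (!![v1, c * w1; v2, c * w2] : Matrix (Fin 2) (Fin 2) F).det ≠ 0 := by
    rw [Matrix.det_fin_two_of]
    intro h0
    apply mul_ne_zero hcne hD
    linear_combination h0
  refine ⟨Matrix.GeneralLinearGroup.mkOfDetNeZero _ hdet, c, mul_self_eq_one_iff.1 hcc, ?_⟩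
  have hval : (Matrix.GeneralLinearGroup.mkOfDetNeZero _ hdet).1 = !![v1, c * w1; v2, c * w2] := rfl
  rw [hval]
  rintro A (rfl | rfl | rfl)
  · rw [hH]
    ext i j
    fin_cases i <;> fin_cases j <;> simp [mk3, Matrix.mul_apply]
    · linear_combination hc1 - hy1
    · linear_combination c * hw1'
    · linear_combination hc2 - hy2
    · linear_combination c * hw2'
  · rw [hN]
    ext i j
    fin_cases i <;> fin_cases j <;> simp [mk3, Matrix.mul_apply]
    · linear_combination hv1
    · linear_combination c * nw1
    · linear_combination hv2
    · linear_combination c * nw2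
  · rw [hM]
    ext i j
    fin_cases i <;> fin_cases j <;> simp [mk3, Matrix.mul_apply]
    · linear_combination -hw1 - w1 * hcc
    · linear_combination c * mw1
    · linear_combination -hw2 - w2 * hcc
    · linear_combination c * mw2

/-- **Lemma B.5**: for a finite field `F` of odd order `q`, the isometry group
`O(3, q)` of the quadratic space `(sl₂(F), det)` is isomorphic to
`ℤ/2ℤ × PGL(2, F)`, where the `PGL(2, F)`-factor acts by conjugation `A ↦ g A g⁻¹`
and the generator of the `ℤ/2ℤ`-factor acts by `A ↦ -A`. -/
theorem O3_iso_Z2_times_PGL2 [Fintype F] (hq : Odd (Fintype.card F)) :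
    ∃ e : (Multiplicative (ZMod 2) × PGL2 F) ≃* O3 F,
      (∀ (g : GL (Fin 2) F) (A : sl2 F),
        ((↑(e (1, (QuotientGroup.mk g : PGL2 F))) : (sl2 F) ≃ₗ[F] (sl2 F)) A
            : Matrix (Fin 2) (Fin 2) F)
          = (g : Matrix (Fin 2) (Fin 2) F) * (A : Matrix (Fin 2) (Fin 2) F)
            * ((g⁻¹ : GL (Fin 2) F) : Matrix (Fin 2) (Fin 2) F))
      ∧ (∀ A : sl2 F,
        ((↑(e (Multiplicative.ofAdd (1 : ZMod 2), 1)) : (sl2 F) ≃ₗ[F] (sl2 F)) A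
            : Matrix (Fin 2) (Fin 2) F)
          = -(A : Matrix (Fin 2) (Fin 2) F)) := by
  have h2 : (2 : F) ≠ 0 := by
    apply Ring.two_ne_zero
    intro h
    have := FiniteField.even_card_of_char_two h
    rcases hq with ⟨k, hk⟩
    omega
  have hb : Function.Bijective (bigHom F) :=
    ⟨(injective_iff_map_eq_one _).2 (inj_aux F h2), surj_aux F h2⟩
  refine ⟨MulEquiv.ofBijective (bigHom F) hb, ?_, ?_⟩
  · intro g A
    have e1 : bigHom F (1, QuotientGroup.mk g) = conjHom F g := by
      change sgnO3Hom F 1 * conjHom F g = _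
      simp
    rw [MulEquiv.ofBijective_apply, e1, conjHom_apply]
  · intro A
    have e1 : bigHom F (Multiplicative.ofAdd 1, 1) = negO3 F := by
      change sgnO3Hom F _ * pglHom F 1 = _
      rw [sgnO3Hom_gen, map_one, mul_one]
    rw [MulEquiv.ofBijective_apply, e1, negO3_apply]
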